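/- For every m ∈ ℂ and every r > 0, the Wronskian of the hyperbolic 1d Bessel functions 𝓘_m and 𝓘_{−m} satisfies W(𝓘_m, 𝓘_{−m})(r) = 𝓘_m(r)·𝓘_{−m}'(r) − 𝓘_m'(r)·𝓘_{−m}(r) = −sin(πm). -/

import Mathlib

open Complex

/-- Olver-normalized hypergeometric function `₀𝐅₁(c; w) = ∑ wⁿ/(n! Γ(c+n))`. -/
noncomputable def zeroF1reg (c w : ℂ) : ℂ :=
  ∑' n : ℕ, w ^ n / ((n.factorial : ℂ) * Complex.Gamma (c + n))

/-- Hyperbolic 1d Bessel function `𝓘_m(z) = √π (z/2)^{1/2+m} ₀𝐅₁(m+1; z²/4)`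
(principal branch powers). -/
noncomputable def besselI1d (m z : ℂ) : ℂ :=
  (Real.sqrt Real.pi : ℂ) * (z / 2) ^ ((1 : ℂ) / 2 + m) * zeroF1reg (m + 1) (z ^ 2 / 4)

/-!
The ladder relations `𝓘_m' = (1/2 + m)/z 𝓘_m + 𝓘_{m+1}` and `𝓘_m' = (1/2 - m)/z 𝓘_m + 𝓘_{m-1}`
turn the Wronskian into the derivative-free expression `𝓘_m 𝓘_{1-m} - 𝓘_{m-1} 𝓘_{-m}`. In it the
powers of `z` combine to integer ones, which leaves `π` times an entire function of `w = z²/4`.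
That function has derivative zero, so it equals its value at `w = 0`, which is `-sin (π m) / π` by
Euler's reflection formula.
-/

/-- The `n`-th term of the power series of `zeroF1reg c` at `w`. It vanishes when `c + n` is a pole
of `Γ`, because `Complex.Gamma` takes the value `0` there. -/
noncomputable def zeroF1regTerm (c w : ℂ) (n : ℕ) : ℂ :=
  w ^ n / ((n.factorial : ℂ) * Complex.Gamma (c + n))

lemma zeroF1regTerm_eq_add_mul (c w : ℂ) (n : ℕ) :
    zeroF1regTerm c w n = (c + n) * zeroF1regTerm (c + 1) w n := by
  have hGamma := one_div_Gamma_eq_self_mul_one_div_Gamma_add_one (c + n)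
  simp only [zeroF1regTerm, div_eq_mul_inv, mul_inv, hGamma, add_right_comm c 1]
  ring

lemma succ_mul_zeroF1regTerm_succ (c w : ℂ) (n : ℕ) :
    (n + 1) * zeroF1regTerm c w (n + 1) = w * zeroF1regTerm (c + 1) w n := by
  have hn : (n + 1 : ℂ) ≠ 0 := n.cast_add_one_ne_zero
  have hshift : c + ((n + 1 : ℕ) : ℂ) = c + 1 + n := by push_cast; ring
  rw [zeroF1regTerm, zeroF1regTerm, hshift, Nat.factorial_succ, Nat.cast_mul, Nat.cast_succ,
    mul_assoc (n + 1 : ℂ), mul_div, mul_div_mul_left _ _ hn, pow_succ', mul_div_assoc]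

lemma hasDerivAt_zeroF1regTerm_succ (c w : ℂ) (n : ℕ) :
    HasDerivAt (fun w => zeroF1regTerm c w (n + 1)) (zeroF1regTerm (c + 1) w n) w := by
  have hmonomial (c v : ℂ) (k : ℕ) : zeroF1regTerm c v k = v ^ k * zeroF1regTerm c 1 k := by
    simp only [zeroF1regTerm, one_pow, mul_one_div]
  have hcoeff := succ_mul_zeroF1regTerm_succ c 1 n
  rw [funext fun v => hmonomial c v (n + 1), hmonomial (c + 1)]
  refine ((hasDerivAt_pow (n + 1) w).mul_const _).congr_deriv ?_
  rw [Nat.cast_succ, Nat.add_sub_cancel]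
  linear_combination w ^ n * hcoeff

lemma norm_zeroF1regTerm_le {w v : ℂ} (h : ‖w‖ ≤ ‖v‖) (c : ℂ) (n : ℕ) :
    ‖zeroF1regTerm c w n‖ ≤ ‖zeroF1regTerm c v n‖ := by
  simp only [zeroF1regTerm, norm_div, norm_pow]
  gcongr

lemma summable_zeroF1regTerm (c w : ℂ) : Summable (zeroF1regTerm c w) := by
  have hlarge : ∀ᶠ n : ℕ in Filter.atTop, 2 * ‖w‖ ≤ n ∧ 1 ≤ ‖c + n‖ :=
    (tendsto_natCast_atTop_atTop.eventually_ge_atTop _).and <|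
      (tendsto_norm_cobounded_atTop.comp <| (tendsto_const_add_cobounded c).comp
        tendsto_natCast_atTop_cobounded).eventually_ge_atTop 1
  refine summable_of_ratio_norm_eventually_le one_half_lt_one ?_
  filter_upwards [hlarge] with n ⟨hw, hc⟩
  have hrec : (n + 1) * zeroF1regTerm c w (n + 1) * (c + n) = w * zeroF1regTerm c w n := by
    rw [succ_mul_zeroF1regTerm_succ, zeroF1regTerm_eq_add_mul c]
    ring
  have hnorm : (n + 1) * ‖zeroF1regTerm c w (n + 1)‖ * ‖c + n‖ = ‖w‖ * ‖zeroF1regTerm c w n‖ := by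
    have hn : ‖(n + 1 : ℂ)‖ = n + 1 := by exact_mod_cast Complex.norm_natCast (n + 1)
    rw [← norm_mul w, ← hrec, norm_mul, norm_mul, hn]
  have hle : (n + 1) * ‖zeroF1regTerm c w (n + 1)‖ ≤ (n + 1) * (1 / 2 * ‖zeroF1regTerm c w n‖) :=
    calc (n + 1) * ‖zeroF1regTerm c w (n + 1)‖
        ≤ (n + 1) * ‖zeroF1regTerm c w (n + 1)‖ * ‖c + n‖ :=
          le_mul_of_one_le_right (by positivity) hc
      _ = ‖w‖ * ‖zeroF1regTerm c w n‖ := hnorm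
      _ ≤ (n + 1) / 2 * ‖zeroF1regTerm c w n‖ := by gcongr; linarith
      _ = (n + 1) * (1 / 2 * ‖zeroF1regTerm c w n‖) := by ring
  exact le_of_mul_le_mul_left hle (by positivity)

lemma hasSum_zeroF1reg (c w : ℂ) : HasSum (zeroF1regTerm c w) (zeroF1reg c w) :=
  (summable_zeroF1regTerm c w).hasSum

lemma zeroF1reg_zero_right (c : ℂ) : zeroF1reg c 0 = (Complex.Gamma c)⁻¹ := by
  rw [zeroF1reg, tsum_eq_single 0 fun n hn => by simp [hn]]
  simp

lemma hasDerivAt_zeroF1reg (c w : ℂ) : HasDerivAt (zeroF1reg c) (zeroF1reg (c + 1) w) w := by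
  set R : ℝ := ‖w‖ + 1
  have hw : w ∈ Metric.ball (0 : ℂ) R := by simp [R]
  have hdiff (n : ℕ) : Differentiable ℂ fun v => zeroF1regTerm c v n := by
    unfold zeroF1regTerm
    fun_prop
  have hbound (n : ℕ) (v : ℂ) (hv : v ∈ Metric.ball 0 R) :
      ‖zeroF1regTerm c v n‖ ≤ ‖zeroF1regTerm c R n‖ :=
    norm_zeroF1regTerm_le ((mem_ball_zero_iff.1 hv).le.trans (by simp [le_abs_self])) c n
  have hsummable := (summable_zeroF1regTerm c R).norm
  have hderiv : HasSum (fun n => deriv (fun v => zeroF1regTerm c v n) w) (deriv (zeroF1reg c) w) :=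
    hasSum_deriv_of_summable_norm hsummable (fun n => (hdiff n).differentiableOn)
      Metric.isOpen_ball hbound hw
  have hshift : HasSum (fun n => deriv (fun v => zeroF1regTerm c v n) w)
      (zeroF1reg (c + 1) w) := by
    have hzero : deriv (fun v => zeroF1regTerm c v 0) w = 0 := by simp [zeroF1regTerm]
    rw [← hasSum_nat_add_iff' 1]
    simpa only [Finset.sum_range_one, hzero, sub_zero,
      (hasDerivAt_zeroF1regTerm_succ c w _).deriv] using
      hasSum_zeroF1reg (c + 1) w
  have hdiffAt : DifferentiableAt ℂ (zeroF1reg c) w :=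
    (differentiableOn_tsum_of_summable_norm hsummable (fun n => (hdiff n).differentiableOn)
      Metric.isOpen_ball hbound).differentiableAt (Metric.isOpen_ball.mem_nhds hw)
  exact hderiv.unique hshift ▸ hdiffAt.hasDerivAt

lemma zeroF1reg_contiguous (c w : ℂ) :
    zeroF1reg c w = c * zeroF1reg (c + 1) w + w * zeroF1reg (c + 2) w := by
  have hindex : HasSum (fun n : ℕ => n * zeroF1regTerm (c + 1) w n) (w * zeroF1reg (c + 2) w) := by
    rw [← hasSum_nat_add_iff' 1]
    simpa [succ_mul_zeroF1regTerm_succ, add_assoc, one_add_one_eq_two] using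
      (hasSum_zeroF1reg (c + 2) w).mul_left w
  have hterm : zeroF1regTerm c w =
      fun n => c * zeroF1regTerm (c + 1) w n + n * zeroF1regTerm (c + 1) w n :=
    funext fun n => by rw [zeroF1regTerm_eq_add_mul, add_mul]
  exact (hasSum_zeroF1reg c w).unique
    (hterm ▸ ((hasSum_zeroF1reg (c + 1) w).mul_left c).add hindex)

lemma zeroF1reg_cross_product (m w : ℂ) :
    w * (zeroF1reg (m + 1) w * zeroF1reg (2 - m) w) - zeroF1reg m w * zeroF1reg (1 - m) w =
      -Complex.sin (Real.pi * m) / Real.pi := by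
  let G : ℂ → ℂ := fun v =>
    v * (zeroF1reg (m + 1) v * zeroF1reg (2 - m) v) - zeroF1reg m v * zeroF1reg (1 - m) v
  have hG (v : ℂ) : HasDerivAt G 0 v := by
    refine (((hasDerivAt_id v).mul
      ((hasDerivAt_zeroF1reg (m + 1) v).mul (hasDerivAt_zeroF1reg (2 - m) v))).sub
      ((hasDerivAt_zeroF1reg m v).mul (hasDerivAt_zeroF1reg (1 - m) v))).congr_deriv ?_
    rw [zeroF1reg_contiguous m, zeroF1reg_contiguous (1 - m), show 1 - m + 1 = 2 - m by ring,
      show 1 - m + 2 = 2 - m + 1 by ring, show m + 1 + 1 = m + 2 by ring]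
    simp only [id, Pi.mul_apply]
    ring
  calc G w = G 0 :=
        is_const_of_deriv_eq_zero (fun v => (hG v).differentiableAt) (fun v => (hG v).deriv) w 0
    _ = -(Complex.Gamma m * Complex.Gamma (1 - m))⁻¹ := by
        simp [G, zeroF1reg_zero_right, mul_comm]
    _ = -Complex.sin (Real.pi * m) / Real.pi := by
        rw [Complex.Gamma_mul_Gamma_one_sub, inv_div, neg_div]

lemma besselI1d_mul_besselI1d (m n : ℂ) {z : ℂ} (hz : z ≠ 0) :
    besselI1d m z * besselI1d n z =
      Real.pi * (z / 2) ^ (1 + m + n) *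
        (zeroF1reg (m + 1) (z ^ 2 / 4) * zeroF1reg (n + 1) (z ^ 2 / 4)) := by
  have hsqrt : (Real.sqrt Real.pi : ℂ) * Real.sqrt Real.pi = Real.pi := by
    rw [← ofReal_mul, Real.mul_self_sqrt Real.pi_pos.le]
  have hpow : (z / 2) ^ (1 / 2 + m) * (z / 2) ^ (1 / 2 + n) = (z / 2) ^ (1 + m + n) := by
    rw [← cpow_add _ _ (div_ne_zero hz two_ne_zero)]
    ring_nf
  rw [← hsqrt, ← hpow, besselI1d, besselI1d]
  ring

lemma besselI1d_add_one (m : ℂ) {z : ℂ} (hz : z ≠ 0) :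
    besselI1d (m + 1) z =
      Real.sqrt Real.pi * (z / 2) ^ (1 / 2 + m) * (z / 2) * zeroF1reg (m + 2) (z ^ 2 / 4) := by
  rw [besselI1d, ← add_assoc, cpow_add _ _ (div_ne_zero hz two_ne_zero), cpow_one,
    show m + 1 + 1 = m + 2 by ring]
  ring

lemma besselI1d_sub_one (m : ℂ) {z : ℂ} (hz : z ≠ 0) :
    besselI1d (m - 1) z = 2 * m / z * besselI1d m z + besselI1d (m + 1) z := by
  have hz2 : z / 2 ≠ 0 := div_ne_zero hz two_ne_zero
  have hlower : (z / 2) ^ (1 / 2 + (m - 1)) = (z / 2) ^ (1 / 2 + m) / (z / 2) := by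
    rw [← add_sub_assoc, cpow_sub _ _ hz2, cpow_one]
  rw [besselI1d_add_one m hz, besselI1d, besselI1d, hlower, sub_add_cancel, zeroF1reg_contiguous m]
  field_simp
  ring

lemma hasDerivAt_besselI1d_raising (m : ℂ) {z : ℂ} (hz : z ∈ slitPlane) :
    HasDerivAt (besselI1d m) ((1 / 2 + m) / z * besselI1d m z + besselI1d (m + 1) z) z := by
  have hz0 : z ≠ 0 := slitPlane_ne_zero hz
  have hz2 : z / 2 ≠ 0 := div_ne_zero hz0 two_ne_zero
  have hmem : z / 2 ∈ slitPlane := by simpa [mem_slitPlane_iff] using hz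
  have hpow : HasDerivAt (fun z : ℂ => (z / 2) ^ (1 / 2 + m))
      ((1 / 2 + m) * (z / 2) ^ (1 / 2 + m - 1) * (1 / 2)) z :=
    ((hasDerivAt_id z).div_const 2).cpow_const hmem
  have hsq : HasDerivAt (fun z : ℂ => z ^ 2 / 4) (z / 2) z :=
    ((hasDerivAt_pow 2 z).div_const 4).congr_deriv (by simp only [Nat.cast_ofNat]; ring)
  refine ((hpow.const_mul (Real.sqrt Real.pi : ℂ)).mul
    ((hasDerivAt_zeroF1reg (m + 1) (z ^ 2 / 4)).comp z hsq)).congr_deriv ?_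
  have hlower : (z / 2) ^ (1 / 2 + m - 1) = (z / 2) ^ (1 / 2 + m) / (z / 2) := by
    rw [cpow_sub _ _ hz2, cpow_one]
  rw [besselI1d_add_one m hz0, besselI1d, Function.comp_apply, hlower,
    show m + 1 + 1 = m + 2 by ring]
  field_simp

lemma hasDerivAt_besselI1d_lowering (m : ℂ) {z : ℂ} (hz : z ∈ slitPlane) :
    HasDerivAt (besselI1d m) ((1 / 2 - m) / z * besselI1d m z + besselI1d (m - 1) z) z := by
  refine (hasDerivAt_besselI1d_raising m hz).congr_deriv ?_
  rw [besselI1d_sub_one m (slitPlane_ne_zero hz)]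
  ring

lemma besselI1d_cross_product (m : ℂ) {z : ℂ} (hz : z ≠ 0) :
    besselI1d m z * besselI1d (1 - m) z - besselI1d (m - 1) z * besselI1d (-m) z =
      -Complex.sin (Real.pi * m) := by
  have hpi : (Real.pi : ℂ) ≠ 0 := ofReal_ne_zero.2 Real.pi_ne_zero
  rw [besselI1d_mul_besselI1d _ _ hz, besselI1d_mul_besselI1d _ _ hz, sub_add_cancel,
    show 1 + m + (1 - m) = (2 : ℕ) by push_cast; ring, show 1 + (m - 1) + -m = 0 by ring,
    show 1 - m + 1 = 2 - m by ring, neg_add_eq_sub, cpow_natCast, cpow_zero]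
  calc _ = Real.pi * (z ^ 2 / 4 * (zeroF1reg (m + 1) (z ^ 2 / 4) * zeroF1reg (2 - m) (z ^ 2 / 4)) -
        zeroF1reg m (z ^ 2 / 4) * zeroF1reg (1 - m) (z ^ 2 / 4)) := by ring
    _ = -Complex.sin (Real.pi * m) := by
        rw [zeroF1reg_cross_product, mul_div_cancel₀ _ hpi]

theorem wronskian_besselI1d_general (m : ℂ) {z : ℂ} (hz : z ∈ slitPlane) :
    besselI1d m z * deriv (besselI1d (-m)) z - deriv (besselI1d m) z * besselI1d (-m) z =
      -Complex.sin (Real.pi * m) := by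
  rw [(hasDerivAt_besselI1d_raising (-m) hz).deriv, (hasDerivAt_besselI1d_lowering m hz).deriv,
    ← besselI1d_cross_product m (slitPlane_ne_zero hz), neg_add_eq_sub]
  ring

/-- for every `m ∈ ℂ` and `r > 0`,
`W(𝓘_m, 𝓘_{-m})(r) = 𝓘_m(r) 𝓘_{-m}'(r) - 𝓘_m'(r) 𝓘_{-m}(r) = -sin(π m)`. -/
theorem wronskian_besselI1d (m : ℂ) :
    ∀ r : ℝ, 0 < r →
      besselI1d m r * deriv (fun r : ℝ => besselI1d (-m) r) r -
        deriv (fun r : ℝ => besselI1d m r) r * besselI1d (-m) r =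
      -Complex.sin (Real.pi * m) := by
  intro r hr
  have hderiv (k : ℂ) : deriv (fun r : ℝ => besselI1d k r) r = deriv (besselI1d k) r :=
    (hasDerivAt_besselI1d_raising k
      (ofReal_mem_slitPlane.2 hr)).differentiableAt.hasDerivAt.comp_ofReal.deriv
  rw [hderiv, hderiv, wronskian_besselI1d_general m (ofReal_mem_slitPlane.2 hr)]
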